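/- arXiv:0903.1532 — 2 statements merged into one kernel-verified Lean document; each statement's English description precedes it below -/
import Mathlib

section
/- A finite sequence [ω_1, …, ω_p] of positive integers is the global orbit pattern of some function f ∈ F_N if and only if ω_1 + ω_2 + ⋯ + ω_p ≤ N. -/
/-!
Each component contains its cycle, so the orders listed in `gop f`, one for each component, add up
to at most `N`. Conversely, placing one dynamical system after another concatenates their global
orbit patterns, so by induction it suffices to realize a single order `a ≤ N`: rotate
`{0, …, a - 1}` and let all other points flow into this cycle. The surplus `N - L.sum` is absorbed
by the last component.
-/

open scoped Classical

/-- Two points are in the same component of `X_N` under `f`: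
`x ~ y` iff some forward iterate of `x` equals some forward iterate of `y`. -/
def sameComp {N : ℕ} (f : Fin N → Fin N) (x y : Fin N) : Prop :=
  ∃ k l : ℕ, f^[k] x = f^[l] y

/-- The order `ω(x, f)` of a point `x`: the length of the periodic cycle contained in
the component of `x`, i.e. the least `p > 0` such that the orbit of `x` is eventually
`p`-periodic. -/
noncomputable def gopOrd {N : ℕ} (f : Fin N → Fin N) (x : Fin N) : ℕ :=
  sInf {p : ℕ | 0 < p ∧ ∃ K : ℕ, f^[K + p] x = f^[K] x}

/-- The global orbit pattern of `f`: the list of orders of the least elements of the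
components of `X_N` under `f`, listed in increasing order of those least elements. -/
noncomputable def gop {N : ℕ} (f : Fin N → Fin N) : List ℕ :=
  ((Finset.univ.filter (fun x : Fin N => ∀ y : Fin N, sameComp f x y → x ≤ y)).sort (· ≤ ·)).map
    (gopOrd f)

open Function

lemma sameComp.symm {N : ℕ} {f : Fin N → Fin N} {x y : Fin N} (h : sameComp f x y) :
    sameComp f y x :=
  let ⟨k, l, hkl⟩ := h
  ⟨l, k, hkl.symm⟩

lemma sameComp.trans {N : ℕ} {f : Fin N → Fin N} {x y z : Fin N} (hxy : sameComp f x y)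
    (hyz : sameComp f y z) : sameComp f x z := by
  obtain ⟨k, l, hkl⟩ := hxy
  obtain ⟨k', l', hkl'⟩ := hyz
  refine ⟨k' + k, l + l', ?_⟩
  calc f^[k' + k] x = f^[k' + l] y := by rw [iterate_add_apply, hkl, ← iterate_add_apply]
    _ = f^[l + k'] y := by rw [add_comm]
    _ = f^[l + l'] z := by rw [iterate_add_apply, hkl', ← iterate_add_apply]

/-- The component of `x` in `X_N` under `f`, as a finite set. -/
noncomputable def component {N : ℕ} (f : Fin N → Fin N) (x : Fin N) : Finset (Fin N) :=
  {y | sameComp f x y}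

lemma mem_component {N : ℕ} {f : Fin N → Fin N} {x y : Fin N} :
    y ∈ component f x ↔ sameComp f x y := by
  simp [component]

/-- The set of least elements of the components of `X_N` under `f`, whose orders `gop f` lists. -/
noncomputable def compMins {N : ℕ} (f : Fin N → Fin N) : Finset (Fin N) :=
  {x | ∀ y, sameComp f x y → x ≤ y}

lemma mem_compMins {N : ℕ} {f : Fin N → Fin N} {x : Fin N} :
    x ∈ compMins f ↔ ∀ y, sameComp f x y → x ≤ y := by
  simp [compMins]

lemma eq_of_mem_compMins {N : ℕ} {f : Fin N → Fin N} {x y : Fin N} (hx : x ∈ compMins f)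
    (hy : y ∈ compMins f) (h : sameComp f x y) : x = y :=
  le_antisymm (mem_compMins.1 hx y h) (mem_compMins.1 hy x h.symm)

lemma gop_eq_map_sort {N : ℕ} (f : Fin N → Fin N) : gop f = (compMins f).sort.map (gopOrd f) :=
  rfl

lemma exists_iterate_mem_periodicPts {α : Type*} [Finite α] (f : α → α) (x : α) :
    ∃ k, f^[k] x ∈ periodicPts f := by
  obtain ⟨i, j, hne, hij⟩ := Finite.exists_ne_map_eq_of_infinite fun k => f^[k] x
  wlog hlt : i < j generalizing i j
  · exact this j i hne.symm hij.symm (by omega)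
  refine ⟨i, mk_mem_periodicPts (Nat.sub_pos_of_lt hlt) ?_⟩
  rw [IsPeriodicPt, IsFixedPt, ← iterate_add_apply, Nat.sub_add_cancel hlt.le]
  exact hij.symm

lemma gopOrd_eq_minimalPeriod {N : ℕ} {f : Fin N → Fin N} {x : Fin N} {k : ℕ}
    (h : f^[k] x ∈ periodicPts f) : gopOrd f x = minimalPeriod f (f^[k] x) := by
  have hmem : minimalPeriod f (f^[k] x) ∈ {p | 0 < p ∧ ∃ K, f^[K + p] x = f^[K] x} :=
    ⟨minimalPeriod_pos_of_mem_periodicPts h, k, by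
      rw [add_comm, iterate_add_apply, iterate_minimalPeriod]⟩
  refine le_antisymm (Nat.sInf_le hmem) (le_csInf ⟨_, hmem⟩ ?_)
  rintro p ⟨hp, K, hK⟩
  have hper : IsPeriodicPt f p (f^[K] x) := by
    rw [IsPeriodicPt, IsFixedPt, ← iterate_add_apply, add_comm, hK]
  have hper' : IsPeriodicPt f p (f^[K] (f^[k] x)) := by
    rw [← iterate_add_apply, add_comm, iterate_add_apply]
    exact hper.apply_iterate k
  rw [← minimalPeriod_apply_iterate h K]
  exact hper'.minimalPeriod_le hp

lemma gopOrd_le_card_component {N : ℕ} (f : Fin N → Fin N) (x : Fin N) :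
    gopOrd f x ≤ (component f x).card := by
  obtain ⟨k, hk⟩ := exists_iterate_mem_periodicPts f x
  rw [gopOrd_eq_minimalPeriod hk, ← Finset.card_range (minimalPeriod f (f^[k] x))]
  refine Finset.card_le_card_of_injOn (fun n => f^[n] (f^[k] x)) (fun n _ => ?_) ?_
  · exact mem_component.2 ⟨n + k, 0, iterate_add_apply f n k x⟩
  · rw [Finset.coe_range]
    exact iterate_injOn_Iio_minimalPeriod

lemma pairwiseDisjoint_component {N : ℕ} (f : Fin N → Fin N) :
    (compMins f : Set (Fin N)).PairwiseDisjoint (component f) := fun _ hx _ hy hxy =>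
  Finset.disjoint_left.2 fun _ hzx hzy =>
    hxy <| eq_of_mem_compMins hx hy <| (mem_component.1 hzx).trans (mem_component.1 hzy).symm

lemma sum_gop_le {N : ℕ} (f : Fin N → Fin N) : (gop f).sum ≤ N :=
  calc (gop f).sum = ∑ x ∈ compMins f, gopOrd f x := by
        rw [gop_eq_map_sort, ← List.sum_toFinset _ (Finset.sort_nodup _ _), Finset.sort_toFinset]
    _ ≤ ∑ x ∈ compMins f, (component f x).card :=
        Finset.sum_le_sum fun x _ => gopOrd_le_card_component f x
    _ = ((compMins f).biUnion (component f)).card :=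
        (Finset.card_biUnion (pairwiseDisjoint_component f)).symm
    _ ≤ N := card_finset_fin_le _

section SingleCycle

/-- The map of `X_N` that wraps around after `a` steps: it rotates `{0, …, a - 1}` cyclically, and
sends every other point into this cycle. -/
def wrap {a N : ℕ} (ha : 0 < a) (haN : a ≤ N) (x : Fin N) : Fin N :=
  ⟨(x + 1) % a, (Nat.mod_lt _ ha).trans_le haN⟩

variable {a N : ℕ} (ha : 0 < a) (haN : a ≤ N)

lemma coe_wrap (x : Fin N) : (wrap ha haN x : ℕ) = (x + 1) % a :=
  rfl

lemma coe_iterate_succ_wrap (k : ℕ) (x : Fin N) :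
    ((wrap ha haN)^[k + 1] x : ℕ) = (x + (k + 1)) % a := by
  induction k with
  | zero => rfl
  | succ k ih =>
    rw [iterate_succ_apply', coe_wrap, ih, Nat.mod_add_mod, add_assoc (x : ℕ)]

lemma sameComp_wrap (x y : Fin N) : sameComp (wrap ha haN) x y :=
  ⟨y + 1, x + 1, Fin.ext <| by
    rw [coe_iterate_succ_wrap, coe_iterate_succ_wrap, add_left_comm]⟩

lemma isPeriodicPt_wrap_apply_iff {p : ℕ} {x : Fin N} :
    IsPeriodicPt (wrap ha haN) p (wrap ha haN x) ↔ a ∣ p := by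
  rw [IsPeriodicPt, IsFixedPt, ← iterate_succ_apply, Fin.ext_iff, coe_iterate_succ_wrap, coe_wrap,
    add_comm p, ← add_assoc]
  exact Nat.add_modEq_left_iff

lemma gopOrd_wrap (x : Fin N) : gopOrd (wrap ha haN) x = a := by
  have hper : wrap ha haN x ∈ periodicPts (wrap ha haN) :=
    mk_mem_periodicPts ha ((isPeriodicPt_wrap_apply_iff ha haN).2 dvd_rfl)
  calc gopOrd (wrap ha haN) x = minimalPeriod (wrap ha haN) (wrap ha haN x) :=
        gopOrd_eq_minimalPeriod (k := 1) hper
    _ = a := Nat.dvd_right_iff_eq.1 fun p => by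
        rw [← isPeriodicPt_iff_minimalPeriod_dvd, isPeriodicPt_wrap_apply_iff]

lemma compMins_wrap : compMins (wrap ha haN) = {⟨0, ha.trans_le haN⟩} := by
  ext x
  rw [Finset.mem_singleton, mem_compMins]
  constructor
  · exact fun h => le_antisymm (h _ (sameComp_wrap ha haN x _)) (Nat.zero_le x)
  · rintro rfl y -
    exact Nat.zero_le y

lemma gop_wrap : gop (wrap ha haN) = [a] := by
  rw [gop_eq_map_sort, compMins_wrap, Finset.sort_singleton, List.map_singleton, gopOrd_wrap]

end SingleCycle

section Embedding

variable {m N : ℕ} {f : Fin m → Fin m} {F : Fin N → Fin N} {e : Fin m → Fin N}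

lemma sameComp_iff_of_semiconj (he : Injective e) (h : Semiconj e f F) {x y : Fin m} :
    sameComp F (e x) (e y) ↔ sameComp f x y := by
  simp only [sameComp, ← (h.iterate_right _).eq, he.eq_iff]

lemma gopOrd_eq_of_semiconj (he : Injective e) (h : Semiconj e f F) (x : Fin m) :
    gopOrd F (e x) = gopOrd f x := by
  simp only [gopOrd, ← (h.iterate_right _).eq, he.eq_iff]

end Embedding

section Juxtaposition

/-- The disjoint union of the dynamical systems `f` and `g`, the points of `g` being placed after
those of `f`. -/
def juxtapose {m n : ℕ} (f : Fin m → Fin m) (g : Fin n → Fin n) : Fin (m + n) → Fin (m + n) :=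
  Fin.append (Fin.castAdd n ∘ f) (Fin.natAdd m ∘ g)

variable {m n : ℕ} (f : Fin m → Fin m) (g : Fin n → Fin n)

lemma semiconj_castAdd_juxtapose : Semiconj (Fin.castAdd n) f (juxtapose f g) := fun i => by
  simp [juxtapose]

lemma semiconj_natAdd_juxtapose : Semiconj (Fin.natAdd m) g (juxtapose f g) := fun j => by
  simp [juxtapose]

lemma castAdd_lt_natAdd (i : Fin m) (j : Fin n) : Fin.castAdd n i < Fin.natAdd m j :=
  i.2.trans_le (Nat.le_add_right m j)

lemma not_sameComp_juxtapose (i : Fin m) (j : Fin n) :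
    ¬ sameComp (juxtapose f g) (Fin.castAdd n i) (Fin.natAdd m j) := by
  rintro ⟨k, l, h⟩
  rw [← ((semiconj_castAdd_juxtapose f g).iterate_right k).eq,
    ← ((semiconj_natAdd_juxtapose f g).iterate_right l).eq] at h
  exact (castAdd_lt_natAdd _ _).ne h

lemma castAdd_mem_compMins_juxtapose {i : Fin m} :
    Fin.castAdd n i ∈ compMins (juxtapose f g) ↔ i ∈ compMins f := by
  simp only [mem_compMins, Fin.forall_fin_add, not_sameComp_juxtapose, false_imp_iff,
    implies_true, and_true, (Fin.strictMono_castAdd n).le_iff_le,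
    sameComp_iff_of_semiconj (Fin.castAdd_injective m n) (semiconj_castAdd_juxtapose f g)]

lemma natAdd_mem_compMins_juxtapose {j : Fin n} :
    Fin.natAdd m j ∈ compMins (juxtapose f g) ↔ j ∈ compMins g := by
  have hnot (i : Fin m) : ¬ sameComp (juxtapose f g) (Fin.natAdd m j) (Fin.castAdd n i) :=
    fun h => not_sameComp_juxtapose f g i j h.symm
  simp only [mem_compMins, Fin.forall_fin_add, hnot, false_imp_iff, implies_true, true_and,
    (Fin.strictMono_natAdd m).le_iff_le,
    sameComp_iff_of_semiconj (Fin.natAdd_injective n m) (semiconj_natAdd_juxtapose f g)]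

lemma sort_compMins_juxtapose : (compMins (juxtapose f g)).sort =
    (compMins f).sort.map (Fin.castAdd n) ++ (compMins g).sort.map (Fin.natAdd m) := by
  refine (Finset.sortedLT_sort _).eq_of_mem_iff ?_ ?_
  · rw [List.sortedLT_iff_pairwise, List.pairwise_append]
    refine ⟨(compMins f).sortedLT_sort.pairwise.map _ (Fin.strictMono_castAdd n),
      (compMins g).sortedLT_sort.pairwise.map _ (Fin.strictMono_natAdd m), ?_⟩
    simp only [List.forall_mem_map]
    exact fun i _ j _ => castAdd_lt_natAdd i j
  · simp [Fin.forall_fin_add, castAdd_mem_compMins_juxtapose, natAdd_mem_compMins_juxtapose,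
      (castAdd_lt_natAdd _ _).ne, (castAdd_lt_natAdd _ _).ne']

lemma gop_juxtapose : gop (juxtapose f g) = gop f ++ gop g := by
  have hf : gopOrd (juxtapose f g) ∘ Fin.castAdd n = gopOrd f :=
    funext <| gopOrd_eq_of_semiconj (Fin.castAdd_injective m n) (semiconj_castAdd_juxtapose f g)
  have hg : gopOrd (juxtapose f g) ∘ Fin.natAdd m = gopOrd g :=
    funext <| gopOrd_eq_of_semiconj (Fin.natAdd_injective n m) (semiconj_natAdd_juxtapose f g)
  simp only [gop_eq_map_sort, sort_compMins_juxtapose, List.map_append, List.map_map, hf, hg]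

end Juxtaposition

lemma exists_gop_eq_of_sum_le {L : List ℕ} (hne : L ≠ []) (hpos : ∀ a ∈ L, 0 < a) {N : ℕ}
    (hsum : L.sum ≤ N) : ∃ f : Fin N → Fin N, gop f = L := by
  induction L, hne using List.recNeNil generalizing N with
  | singleton a =>
    exact ⟨wrap (hpos a (List.mem_singleton_self a)) (by simpa using hsum), gop_wrap _ _⟩
  | cons a L hne ih =>
    rw [List.sum_cons] at hsum
    rw [List.forall_mem_cons] at hpos
    obtain ⟨n, rfl⟩ := Nat.exists_eq_add_of_le ((Nat.le_add_right a L.sum).trans hsum)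
    obtain ⟨g, rfl⟩ := ih hpos.2 (Nat.le_of_add_le_add_left hsum)
    exact ⟨juxtapose (wrap hpos.1 le_rfl) g, by rw [gop_juxtapose, gop_wrap, List.singleton_append]⟩

/-- a finite nonempty sequence `[ω_1, …, ω_p]` of positive integers is the
global orbit pattern of some `f ∈ F_N` if and only if `ω_1 + ⋯ + ω_p ≤ N`. -/
theorem exists_gop_iff_sum_le (N : ℕ) (hN : 0 < N) (L : List ℕ)
    (hpos : ∀ a ∈ L, 0 < a) (hne : L ≠ []) :
    (∃ f : Fin N → Fin N, gop f = L) ↔ L.sum ≤ N :=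
  ⟨fun ⟨f, hf⟩ => hf ▸ sum_gop_le f, exists_gop_eq_of_sum_le hne hpos⟩
end

section
/- For every integer k with 1 ≤ k ≤ N, the number of functions f ∈ F_N whose global orbit pattern is [k] (that is, X_N has a single component under f, whose cycle has length k) equals C(N−1, N−k) · N^{N−k} · (k−1)! (equivalently, (N−1)! · N^{N−k} / (N−k)!). -/
/-!
Write `n` for the number of points and let `r(s)` be the number of self-maps all of whose orbits
meet `s`. The heart of the count is `n * r(s) = #s * n ^ n`: a random map has this property with
probability `#s / n`. To see this, let all orbits of `f` meet `t`, and let `w ∈ t` and a point `y`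
be given. After redirecting `w` to `y`, all orbits meet `t \ {w}` exactly when `w` is not the first
point of `t` on the orbit of `y`, so this happens for `#t - 1` of the points `w`. Exchanging `f w`
with `y` therefore gives `∑ w ∈ t, r(t \ {w}) = (#t - 1) * r(t)`. The summands are equal by
symmetry, and the formula follows by descent from `r(univ) = n ^ n`.

A map with pattern `[k]` is one that shifts an injective cyclic sequence of `k` points whose range
all orbits meet; prescribing the values on the range divides `r` by `n ^ k`. There are
`n.descFactorial k` such sequences, and each map arises from `k` of them, its rotations.
-/

open scoped Classical

namespace GlobalOrbitPattern

open Function Finset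

section Reaches

variable {α β : Type*} {f g : α → α} {s t : Set α} {w x y : α}

/-- Every forward orbit of `f` meets `s`; equivalently, off `s` the graph of `f` is a forest rooted
in `s`. The values of `f` on `s` are irrelevant. -/
def Reaches (f : α → α) (s : Set α) : Prop := ∀ x, ∃ n, f^[n] x ∈ s

/-- The first point of `s` on the forward orbit of `x` under `f`, or `x` itself if the orbit does
not meet `s`. -/
noncomputable def firstHit (f : α → α) (s : Set α) (x : α) : α := f^[sInf {n | f^[n] x ∈ s}] x

lemma Reaches.mono (h : Reaches f s) (hst : s ⊆ t) : Reaches f t := fun x =>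
  (h x).imp fun _ hn => hst hn

lemma Reaches.firstHit_mem (h : Reaches f s) (x : α) : firstHit f s x ∈ s :=
  Nat.sInf_mem (h x)

lemma iterate_eq_of_eqOn_compl (hfg : Set.EqOn f g sᶜ) {n : ℕ} (hn : ∀ m < n, f^[m] x ∉ s) :
    f^[n] x = g^[n] x := by
  induction n with
  | zero => rfl
  | succ n ih =>
    rw [iterate_succ_apply', iterate_succ_apply', ← ih fun m hm => hn m (hm.trans n.lt_succ_self),
      hfg (hn n n.lt_succ_self)]

lemma exists_iterate_eq_firstHit (hfg : Set.EqOn f g sᶜ) (x : α) :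
    ∃ n, g^[n] x = firstHit f s x ∧ ∀ m < n, g^[m] x ∉ s := by
  have hbefore : ∀ m < sInf {n | f^[n] x ∈ s}, f^[m] x ∉ s := fun m hm => Nat.notMem_of_lt_sInf hm
  refine ⟨_, (iterate_eq_of_eqOn_compl hfg hbefore).symm, fun m hm => ?_⟩
  rw [← iterate_eq_of_eqOn_compl hfg fun i hi => hbefore i (hi.trans hm)]
  exact hbefore m hm

lemma reaches_congr (hfg : Set.EqOn f g sᶜ) : Reaches f s ↔ Reaches g s := by
  suffices h : ∀ {f g : α → α}, Set.EqOn f g sᶜ → Reaches f s → Reaches g s from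
    ⟨h hfg, h hfg.symm⟩
  intro f g hfg hf x
  obtain ⟨n, hn, -⟩ := exists_iterate_eq_firstHit hfg x
  exact ⟨n, hn ▸ hf.firstHit_mem x⟩

lemma eqOn_update_compl (f : α → α) (y : α) (hw : w ∈ s) : Set.EqOn f (update f w y) sᶜ :=
  fun _ hx => (update_of_ne (ne_of_mem_of_not_mem hw hx).symm _ _).symm

lemma Reaches.update_diff_singleton (h : Reaches f s) (hw : w ∈ s) (hy : w ≠ firstHit f s y) :
    Reaches (update f w y) (s \ {w}) := by
  have hit := exists_iterate_eq_firstHit (eqOn_update_compl f y hw)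
  intro x
  obtain ⟨n, hn, -⟩ := hit x
  by_cases hx : firstHit f s x = w
  · obtain ⟨m, hm, -⟩ := hit y
    refine ⟨m + (n + 1), ?_⟩
    rw [iterate_add_apply, iterate_succ_apply', hn, hx, update_self, hm]
    exact ⟨h.firstHit_mem y, hy.symm⟩
  · exact ⟨n, hn ▸ ⟨h.firstHit_mem x, hx⟩⟩

lemma not_reaches_update_firstHit (h : firstHit f s y ∈ s) :
    ¬ Reaches (update f (firstHit f s y) y) (s \ {firstHit f s y}) := by
  obtain ⟨n, hn, hbefore⟩ := exists_iterate_eq_firstHit (eqOn_update_compl f y h) y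
  have hper : IsPeriodicPt (update f (firstHit f s y) y) (n + 1) y := by
    rw [IsPeriodicPt, IsFixedPt, iterate_succ_apply', hn, update_self]
  intro hreach
  obtain ⟨m, hm⟩ := hreach y
  rw [← hper.iterate_mod_apply] at hm
  rcases (Nat.lt_succ_iff.1 (Nat.mod_lt m n.succ_pos)).lt_or_eq with hlt | heq
  · exact hbefore _ hlt hm.1
  · exact hm.2 ((congrArg (fun i => (update f (firstHit f s y) y)^[i] y) heq).trans hn)

lemma Reaches.update_diff_singleton_iff (h : Reaches f s) (hw : w ∈ s) :
    Reaches (update f w y) (s \ {w}) ↔ firstHit f s y ≠ w := by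
  refine ⟨?_, fun hy => h.update_diff_singleton hw hy.symm⟩
  rintro hreach rfl
  exact not_reaches_update_firstHit hw hreach

lemma Reaches.image (σ : α ≃ β) (h : Reaches f s) : Reaches (σ.conj f) (σ '' s) := fun x => by
  obtain ⟨n, hn⟩ := h (σ.symm x)
  have hconj : Semiconj σ f (σ.conj f) := fun y => by simp
  exact ⟨n, _, hn, by rw [(hconj.iterate_right n).eq, σ.apply_symm_apply]⟩

lemma reaches_conj_image_iff (σ : α ≃ β) : Reaches (σ.conj f) (σ '' s) ↔ Reaches f s :=
  ⟨fun h => by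
    have := h.image σ.symm
    simpa [← Equiv.conj_symm, Set.image_image] using this, Reaches.image σ⟩

lemma card_reaches_image (σ : α ≃ β) (s : Set α) :
    Nat.card {f : β → β // Reaches f (σ '' s)} = Nat.card {f : α → α // Reaches f s} :=
  (Nat.card_congr (σ.conj.subtypeEquiv fun _ => (reaches_conj_image_iff σ).symm)).symm

/-- Exchange the value of `f` at `w` with the point `y` carried along. -/
noncomputable def exchangeAt (w : α) : Equiv.Perm ((α → α) × α) :=
  Involutive.toPerm (fun p => (update p.1 w p.2, p.1 w)) fun p => by simp

lemma card_reaches_update (w : α) (s : Set α) :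
    Nat.card {p : (α → α) × α // Reaches (update p.1 w p.2) s}
      = Nat.card {f : α → α // Reaches f s} * Nat.card α := by
  rw [← Nat.card_prod]
  exact Nat.card_congr
    (((exchangeAt w).subtypeEquiv (q := fun p => Reaches p.1 s) fun _ => Iff.rfl).trans
      (Equiv.prodSubtypeFstEquivSubtypeProd (p := fun f => Reaches f s)))

lemma card_reaches_and_reaches_update (hw : w ∈ s) :
    Nat.card {p : (α → α) × α // Reaches p.1 s ∧ Reaches (update p.1 w p.2) (s \ {w})}
      = Nat.card {f : α → α // Reaches f (s \ {w})} * Nat.card α := by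
  rw [← card_reaches_update]
  exact Nat.card_congr <| Equiv.subtypeEquivRight fun p => and_iff_right_of_imp fun hp =>
    (reaches_congr (eqOn_update_compl p.1 p.2 hw)).2 (hp.mono Set.sdiff_subset)

variable [Finite α]

lemma sum_card_reaches_diff_singleton (t : Finset α) :
    (∑ w ∈ t, Nat.card {f : α → α // Reaches f (t \ {w})}) * Nat.card α
      = (#t - 1) * (Nat.card {f : α → α // Reaches f t} * Nat.card α) := by
  have := Fintype.ofFinite α
  let pairs : Finset ((α → α) × α) := {p | Reaches p.1 t}
  let stillReaches (w : α) (p : (α → α) × α) : Prop := Reaches (update p.1 w p.2) (t \ {w})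
  have card_above : ∀ w ∈ t, #(pairs.bipartiteAbove stillReaches w)
      = Nat.card {f : α → α // Reaches f (t \ {w})} * Nat.card α := fun w hw => by
    rw [← card_reaches_and_reaches_update (mem_coe.2 hw), Nat.card_eq_fintype_card,
      Fintype.card_subtype, bipartiteAbove, filter_filter]
  have card_below : ∀ p ∈ pairs, #(t.bipartiteBelow stillReaches p) = #t - 1 := fun p hp => by
    have hp : Reaches p.1 t := (mem_filter.1 hp).2
    rw [← card_erase_of_mem (mem_coe.1 (hp.firstHit_mem p.2)), ← filter_ne]
    exact congrArg card (filter_congr fun w hw => hp.update_diff_singleton_iff hw)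
  have card_pairs : #pairs = Nat.card {f : α → α // Reaches f t} * Nat.card α := by
    rw [← Nat.card_prod, ← Nat.card_congr Equiv.prodSubtypeFstEquivSubtypeProd,
      Nat.card_eq_fintype_card, Fintype.card_subtype]
  rw [sum_mul, ← sum_congr rfl card_above, sum_card_bipartiteAbove_eq_sum_card_bipartiteBelow,
    sum_const_nat card_below, card_pairs, mul_comm]

lemma card_reaches_insert {s : Finset α} (hw : w ∉ s) :
    (#s + 1) * Nat.card {f : α → α // Reaches f s}
      = #s * Nat.card {f : α → α // Reaches f (insert w s : Finset α)} := by
  have card_removed : ∀ v ∈ insert w s,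
      Nat.card {f : α → α // Reaches f ((insert w s : Finset α) \ {v})}
        = Nat.card {f : α → α // Reaches f s} := by
    intro v hv
    have hset : ((insert w s : Finset α) : Set α) \ {v} = Equiv.swap v w '' s := by
      rcases mem_insert.1 hv with rfl | hv
      · simp [hw]
      · rw [Equiv.image_swap_of_mem_of_notMem (mem_coe.2 hv) (mt mem_coe.1 hw), coe_insert]
    rw [hset, card_reaches_image]
  have hsum := sum_card_reaches_diff_singleton (insert w s)
  rw [sum_congr rfl card_removed, sum_const, card_insert_of_notMem hw, Nat.add_sub_cancel,
    smul_eq_mul, ← mul_assoc] at hsum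
  have : Nonempty α := ⟨w⟩
  exact Nat.eq_of_mul_eq_mul_right Nat.card_pos hsum

theorem card_mul_card_reaches (s : Finset α) :
    Nat.card α * Nat.card {f : α → α // Reaches f s} = #s * Nat.card α ^ Nat.card α := by
  have := Fintype.ofFinite α
  induction hc : sᶜ using Finset.induction_on generalizing s with
  | empty =>
    have hs : s = univ := compl_eq_empty_iff s |>.1 hc
    have hall : ∀ f : α → α, Reaches f s := fun f x => ⟨0, by simp [hs]⟩
    rw [Nat.card_congr (Equiv.subtypeUnivEquiv hall), Nat.card_fun, hs, card_univ,
      Nat.card_eq_fintype_card]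
  | insert w t hw ih =>
    have hws : w ∉ s := mem_compl.1 (hc ▸ mem_insert_self w t)
    have ih := ih (insert w s) (by rw [compl_insert, hc, erase_insert hw])
    rw [card_insert_of_notMem hws] at ih
    apply Nat.eq_of_mul_eq_mul_left (#s).succ_pos
    calc (#s + 1) * (Nat.card α * Nat.card {f : α → α // Reaches f s})
        = #s * (Nat.card α * Nat.card {f : α → α // Reaches f (insert w s : Finset α)}) := by
          rw [mul_left_comm, card_reaches_insert hws, mul_left_comm]
      _ = (#s + 1) * (#s * Nat.card α ^ Nat.card α) := by rw [ih, mul_left_comm]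

end Reaches

section PrescribedValues

variable {ι α β : Type*}

lemma card_and_comp_eq_mul {P : (α → β) → Prop} (e : ι ↪ α)
    (hP : ∀ f g, Set.EqOn f g (Set.range e)ᶜ → (P f ↔ P g)) (u : ι → β) :
    Nat.card {f : α → β // P f ∧ f ∘ e = u} * Nat.card (ι → β) = Nat.card {f : α → β // P f} := by
  have extend_eqOn (v : ι → β) (f : α → β) : Set.EqOn (extend e v f) f (Set.range e)ᶜ :=
    fun x hx => extend_apply' v f x hx
  have extend_extend_comp (f : α → β) (v : ι → β) : extend e (f ∘ e) (extend e v f) = f := by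
    funext x
    by_cases hx : x ∈ Set.range e
    · obtain ⟨i, rfl⟩ := hx
      exact e.injective.extend_apply _ _ i
    · rw [extend_apply' _ _ _ hx, extend_apply' _ _ _ hx]
  let splitOff : {f : α → β // P f} ≃ {f : α → β // P f ∧ f ∘ e = u} × (ι → β) :=
    { toFun f := (⟨extend e u f, (hP _ _ (extend_eqOn u f)).2 f.2, extend_comp e.injective _ _⟩,
        f ∘ e)
      invFun p := ⟨extend e p.2 p.1, (hP _ _ (extend_eqOn p.2 p.1)).2 p.1.2.1⟩
      left_inv f := Subtype.ext (extend_extend_comp f u)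
      right_inv := by
        rintro ⟨⟨f, hf, rfl⟩, v⟩
        simp [extend_extend_comp, extend_comp e.injective] }
  rw [Nat.card_congr splitOff, Nat.card_prod]

end PrescribedValues

section Unicyclic

variable {α : Type*} {f : α → α} {k : ℕ}

/-- The cyclic sequence `e` lists, in order, a cycle of `f` that every forward orbit reaches; it is
then the only cycle of `f`. -/
structure ListsCycle (f : α → α) (e : ZMod k ↪ α) : Prop where
  semiconj : Semiconj e (· + 1) f
  reaches : Reaches f (Set.range e)

/-- For `k > 0`: the map `f` has a single component, and the cycle in it has length `k`. For `k = 0`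
the index set is `ZMod 0 = ℤ`, so the definition asks for a bi-infinite orbit instead. -/
def Unicyclic (f : α → α) (k : ℕ) : Prop := ∃ e : ZMod k ↪ α, ListsCycle f e

lemma iterate_apply_of_semiconj_add_one {R : Type*} [AddMonoidWithOne R] {e : R → α}
    (h : Semiconj e (· + 1) f) (n : ℕ) (z : R) : f^[n] (e z) = e (z + n) := by
  rw [← (h.iterate_right n).eq, add_right_iterate_apply, nsmul_one]

lemma ListsCycle.comp_add_right {e : ZMod k ↪ α} (h : ListsCycle f e) (a : ZMod k) :
    ListsCycle f ((Equiv.addRight a).toEmbedding.trans e) where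
  semiconj z := by
    have := h.semiconj (z + a)
    simpa [add_right_comm] using this
  reaches := by
    have hrange : Set.range ((Equiv.addRight a).toEmbedding.trans e) = Set.range e :=
      (Equiv.addRight a).surjective.range_comp e
    exact hrange ▸ h.reaches

variable [NeZero k]

lemma ListsCycle.eq_comp_add_right {e e' : ZMod k ↪ α} (h : ListsCycle f e)
    (h' : ListsCycle f e') : ∃ a, (Equiv.addRight a).toEmbedding.trans e = e' := by
  obtain ⟨n, b, hb⟩ := h.reaches (e' 0)
  rw [iterate_apply_of_semiconj_add_one h'.semiconj, zero_add] at hb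
  refine ⟨b - (n : ZMod k), Embedding.ext fun z => ?_⟩
  obtain ⟨m, hm⟩ := ZMod.natCast_zmod_surjective (z - (n : ZMod k))
  calc e (z + (b - (n : ZMod k))) = f^[m] (e b) := by
        rw [iterate_apply_of_semiconj_add_one h.semiconj, hm, add_sub_left_comm]
    _ = e' z := by
        rw [hb, iterate_apply_of_semiconj_add_one h'.semiconj, hm, add_sub_cancel]

lemma Unicyclic.card_listsCycle (h : Unicyclic f k) :
    Nat.card {e : ZMod k ↪ α // ListsCycle f e} = k := by
  obtain ⟨e, he⟩ := h
  let rotate (a : ZMod k) : {e : ZMod k ↪ α // ListsCycle f e} := ⟨_, he.comp_add_right a⟩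
  suffices h : Bijective rotate by rw [← Nat.card_eq_of_bijective rotate h, Nat.card_zmod]
  refine ⟨fun a b hab => ?_, ?_⟩
  · have := DFunLike.congr_fun (congrArg Subtype.val hab) 0
    simpa [rotate] using this
  · rintro ⟨e', he'⟩
    obtain ⟨a, ha⟩ := he.eq_comp_add_right he'
    exact ⟨a, Subtype.ext ha⟩

lemma sum_card_listsCycle [Fintype (α → α)] :
    ∑ f : α → α, Nat.card {e : ZMod k ↪ α // ListsCycle f e}
      = Nat.card {f : α → α // Unicyclic f k} * k := by
  have hcard (f : α → α) : Nat.card {e : ZMod k ↪ α // ListsCycle f e}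
      = if Unicyclic f k then k else 0 := by
    split_ifs with hf
    · exact hf.card_listsCycle
    · have : IsEmpty {e : ZMod k ↪ α // ListsCycle f e} := ⟨fun e => hf ⟨e, e.2⟩⟩
      exact Nat.card_of_isEmpty
  simp_rw [hcard]
  rw [← sum_filter, sum_const, smul_eq_mul, Nat.card_eq_fintype_card, Fintype.card_subtype]

variable [Finite α]

lemma card_listsCycle_mul (e : ZMod k ↪ α) :
    Nat.card {f : α → α // ListsCycle f e} * Nat.card α ^ (k + 1)
      = k * Nat.card α ^ Nat.card α := by
  have := Fintype.ofFinite α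
  have hsplit : Nat.card {f : α → α // ListsCycle f e} * Nat.card α ^ k
      = Nat.card {f : α → α // Reaches f (Set.range e)} := by
    rw [← card_and_comp_eq_mul e (fun f g => reaches_congr) fun z => e (z + 1), Nat.card_fun,
      Nat.card_zmod]
    congr 1
    refine Nat.card_congr (Equiv.subtypeEquivRight fun f => ⟨fun h => ⟨h.reaches, ?_⟩, ?_⟩)
    · exact h.semiconj.comp_eq.symm
    · exact fun h => ⟨semiconj_iff_comp_eq.2 h.2.symm, h.1⟩
  have hreach := card_mul_card_reaches (univ.map e)
  rw [coe_map, coe_univ, Set.image_univ, card_map, card_univ, ZMod.card] at hreach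
  rw [pow_succ, ← mul_assoc, hsplit, mul_comm, hreach]

lemma card_unicyclic_mul :
    Nat.card {f : α → α // Unicyclic f k} * Nat.card α ^ (k + 1)
      = (Nat.card α).descFactorial k * Nat.card α ^ Nat.card α := by
  have := Fintype.ofFinite α
  have hcount : Nat.card {f : α → α // Unicyclic f k} * k
      = ∑ e : ZMod k ↪ α, Nat.card {f : α → α // ListsCycle f e} := by
    rw [← sum_card_listsCycle, ← Nat.card_sigma, ← Nat.card_sigma]
    exact Nat.card_congr <| (Equiv.subtypeProdEquivSigmaSubtype _).symm.trans <|
      ((Equiv.prodComm _ _).subtypeEquiv fun _ => Iff.rfl).trans <|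
        Equiv.subtypeProdEquivSigmaSubtype fun e f => ListsCycle f e
  apply Nat.eq_of_mul_eq_mul_right (NeZero.pos k)
  rw [mul_right_comm, hcount, sum_mul, sum_congr rfl fun e _ => card_listsCycle_mul e, sum_const,
    card_univ, Fintype.card_embedding_eq, ZMod.card, ← Nat.card_eq_fintype_card, smul_eq_mul,
    mul_comm k, mul_assoc]

theorem card_unicyclic (hk : k ≤ Nat.card α) :
    Nat.card {f : α → α // Unicyclic f k}
      = (Nat.card α - 1).descFactorial (k - 1) * Nat.card α ^ (Nat.card α - k) := by
  have hmul := card_unicyclic_mul (α := α) (k := k)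
  have hpos : 0 < Nat.card α := (NeZero.pos k).trans_le hk
  have hdesc : (Nat.card α).descFactorial k
      = Nat.card α * (Nat.card α - 1).descFactorial (k - 1) := by
    obtain ⟨n, hn⟩ := Nat.exists_eq_add_one.2 hpos
    obtain ⟨j, hj⟩ := Nat.exists_eq_add_one.2 (NeZero.pos k)
    rw [hn, hj]
    exact Nat.succ_descFactorial_succ n j
  apply Nat.eq_of_mul_eq_mul_right (pow_pos hpos (k + 1))
  rw [hmul, hdesc, mul_assoc _ (_ ^ _), ← pow_add,
    show Nat.card α - k + (k + 1) = Nat.card α + 1 by lia]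
  ring

end Unicyclic

section Pattern

variable {α : Type*} {k : ℕ}

lemma exists_embedding_of_minimalPeriod_eq [NeZero k] {f : α → α} {c : α}
    (hc : minimalPeriod f c = k) : ∃ e : ZMod k ↪ α, Semiconj e (· + 1) f ∧ e 0 = c := by
  have iterate_val (n : ℕ) : f^[(n : ZMod k).val] c = f^[n] c := by
    rw [ZMod.val_natCast, ← hc, iterate_mod_minimalPeriod_eq]
  refine ⟨⟨fun z => f^[z.val] c, fun z z' h => ZMod.val_injective k ?_⟩, fun z => ?_, ?_⟩
  · exact (iterate_eq_iterate_iff_of_lt_minimalPeriod (hc ▸ z.val_lt) (hc ▸ z'.val_lt)).1 h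
  · obtain ⟨n, rfl⟩ := ZMod.natCast_zmod_surjective z
    change f^[((n : ZMod k) + 1).val] c = f (f^[(n : ZMod k).val] c)
    rw [← Nat.cast_succ, iterate_val, iterate_val, iterate_succ_apply']
  · exact congrArg (f^[·] c) ZMod.val_zero

variable {N : ℕ} {f : Fin N → Fin N}

lemma sameComp_equivalence (f : Fin N → Fin N) : Equivalence (sameComp f) where
  refl _ := ⟨0, 0, rfl⟩
  symm := fun ⟨a, b, h⟩ => ⟨b, a, h.symm⟩
  trans := fun ⟨a, b, h⟩ ⟨a', b', h'⟩ => ⟨a' + a, b + b', by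
    rw [iterate_add_apply, h, iterate_add_apply f b, ← h', ← iterate_add_apply,
      ← iterate_add_apply, add_comm]⟩

lemma exists_least_sameComp (f : Fin N → Fin N) (y : Fin N) :
    ∃ x, sameComp f y x ∧ ∀ z, sameComp f x z → x ≤ z := by
  obtain ⟨x, hx, hmin⟩ := Set.exists_min_image {x | sameComp f y x} id (Set.toFinite _)
    ⟨y, (sameComp_equivalence f).refl y⟩
  exact ⟨x, hx, fun z hz => hmin z ((sameComp_equivalence f).trans hx hz)⟩

lemma exists_sameComp_of_gop_eq_singleton (h : gop f = [k]) :
    ∃ x, (∀ y, sameComp f y x) ∧ gopOrd f x = k := by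
  obtain ⟨x, hx, hord⟩ := List.map_eq_singleton_iff.1 h
  refine ⟨x, fun y => ?_, hord⟩
  obtain ⟨z, hyz, hz⟩ := exists_least_sameComp f y
  have hmem : z ∈ ({x | ∀ y, sameComp f x y → x ≤ y} : Finset (Fin N)).sort (· ≤ ·) :=
    (mem_sort _).2 (mem_filter.2 ⟨mem_univ z, hz⟩)
  rw [hx, List.mem_singleton] at hmem
  exact hmem ▸ hyz

lemma gop_eq_singleton [NeZero N] (hcomp : ∀ x y, sameComp f x y) (hord : gopOrd f 0 = k) :
    gop f = [k] := by
  have hleast : ({x | ∀ y, sameComp f x y → x ≤ y} : Finset (Fin N)) = {0} := by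
    ext x
    simp only [hcomp, true_imp_iff, mem_filter_univ, mem_singleton]
    exact ⟨fun h => nonpos_iff_eq_zero.1 (h 0), fun h y => h ▸ Fin.zero_le y⟩
  rw [gop, hleast, sort_singleton, List.map_singleton, hord]

lemma exists_minimalPeriod_eq_gopOrd {x : Fin N} (hx : gopOrd f x ≠ 0) :
    ∃ n, minimalPeriod f (f^[n] x) = gopOrd f x := by
  have hne := Nat.nonempty_of_pos_sInf (Nat.pos_of_ne_zero hx)
  obtain ⟨hpos, n, hn⟩ := Nat.sInf_mem hne
  have iterate_add_eq_iff (p : ℕ) : f^[n + p] x = f^[n] x ↔ IsPeriodicPt f p (f^[n] x) := by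
    rw [add_comm, iterate_add_apply, IsPeriodicPt, IsFixedPt]
  have hper : IsPeriodicPt f (gopOrd f x) (f^[n] x) := (iterate_add_eq_iff _).1 hn
  refine ⟨n, (hper.minimalPeriod_le hpos).antisymm (Nat.sInf_le ?_)⟩
  exact ⟨hper.minimalPeriod_pos hpos, n, (iterate_add_eq_iff _).2 (isPeriodicPt_minimalPeriod f _)⟩

variable [NeZero k]

lemma unicyclic_of_gop_eq_singleton (h : gop f = [k]) : Unicyclic f k := by
  obtain ⟨x, hcomp, hord⟩ := exists_sameComp_of_gop_eq_singleton h
  obtain ⟨n, hn⟩ := exists_minimalPeriod_eq_gopOrd (hord ▸ NeZero.ne k)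
  obtain ⟨e, he, he0⟩ := exists_embedding_of_minimalPeriod_eq (hn.trans hord)
  refine ⟨e, he, fun y => ?_⟩
  obtain ⟨a, b, hab⟩ := hcomp y
  refine ⟨n + a, b, ?_⟩
  rw [iterate_add_apply, hab, ← iterate_add_apply, add_comm, iterate_add_apply, ← he0,
    iterate_apply_of_semiconj_add_one he, zero_add]

lemma ListsCycle.sameComp {e : ZMod k ↪ Fin N} (h : ListsCycle f e) (x y : Fin N) :
    sameComp f x y := by
  have sameComp_zero (z : Fin N) : _root_.sameComp f z (e 0) := by
    obtain ⟨n, a, ha⟩ := h.reaches z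
    obtain ⟨m, rfl⟩ := ZMod.natCast_zmod_surjective a
    exact ⟨n, m, by rw [← ha, iterate_apply_of_semiconj_add_one h.semiconj, zero_add]⟩
  exact (sameComp_equivalence f).trans (sameComp_zero x)
    ((sameComp_equivalence f).symm (sameComp_zero y))

lemma ListsCycle.gopOrd_eq {e : ZMod k ↪ Fin N} (h : ListsCycle f e) (x : Fin N) :
    gopOrd f x = k := by
  have iterate_eq {n p : ℕ} {a : ZMod k} (ha : e a = f^[n] x) : f^[n + p] x = e (a + p) := by
    rw [add_comm, iterate_add_apply, ← ha, iterate_apply_of_semiconj_add_one h.semiconj]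
  obtain ⟨n, a, ha⟩ := h.reaches x
  have hk : k ∈ {p : ℕ | 0 < p ∧ ∃ K, f^[K + p] x = f^[K] x} :=
    ⟨NeZero.pos k, n, by rw [iterate_eq ha, ← ha, ZMod.natCast_self, add_zero]⟩
  refine (Nat.sInf_le hk).antisymm (le_csInf ⟨k, hk⟩ ?_)
  rintro p ⟨hp, K, hK⟩
  -- Both sides of `hK` may lie off the cycle; `n` more steps bring them onto it.
  have hcycle : e (a + ((K + p : ℕ) : ZMod k)) = e (a + (K : ZMod k)) := by
    rw [← iterate_eq ha, ← iterate_eq ha, iterate_add_apply, hK, ← iterate_add_apply]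
  have hzero : (p : ZMod k) = 0 := by simpa using e.injective hcycle
  exact Nat.le_of_dvd hp ((ZMod.natCast_eq_zero_iff p k).1 hzero)

lemma gop_eq_singleton_iff_unicyclic : gop f = [k] ↔ Unicyclic f k := by
  refine ⟨unicyclic_of_gop_eq_singleton, fun ⟨e, he⟩ => ?_⟩
  have : NeZero N := ⟨fun hN => (Fin.cast hN (e 0)).elim0⟩
  exact gop_eq_singleton he.sameComp (he.gopOrd_eq 0)

end Pattern

end GlobalOrbitPattern

/-- for `1 ≤ k ≤ N`, the number of `f ∈ F_N` whose global orbit pattern is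
`[k]` equals `C(N−1, N−k) · N^{N−k} · (k−1)!`. -/
theorem card_gop_single (N k : ℕ) (hk : 1 ≤ k) (hkN : k ≤ N) :
    Nat.card {f : Fin N → Fin N // gop f = [k]}
      = (N - 1).choose (N - k) * N ^ (N - k) * (k - 1).factorial := by
  have : NeZero k := ⟨by lia⟩
  have hchoose : (N - 1).choose (N - k) = (N - 1).choose (k - 1) :=
    Nat.choose_symm_of_eq_add (by lia)
  calc Nat.card {f : Fin N → Fin N // gop f = [k]}
      = Nat.card {f : Fin N → Fin N // GlobalOrbitPattern.Unicyclic f k} :=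
        Nat.card_congr (Equiv.subtypeEquivRight fun _ =>
          GlobalOrbitPattern.gop_eq_singleton_iff_unicyclic)
    _ = (N - 1).descFactorial (k - 1) * N ^ (N - k) := by
        simpa only [Nat.card_fin] using
          GlobalOrbitPattern.card_unicyclic (α := Fin N) (by rwa [Nat.card_fin])
    _ = (N - 1).choose (N - k) * N ^ (N - k) * (k - 1).factorial := by
        rw [Nat.descFactorial_eq_factorial_mul_choose, hchoose]
        ring
end
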